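/- Let p be a prime, and let X, Z be the shift and clock matrices in Matrix (ZMod p) (ZMod p) ℂ. The ℂ-linear span of the set of generalized Pauli matrices { X^{a.val} · Z^{b.val} : a, b ∈ ZMod p } is the whole matrix algebra Matrix (ZMod p) (ZMod p) ℂ; that is, the generalized Pauli matrices span the full p × p matrix algebra (and hence form a basis). -/

import Mathlib

/-- The generalized Pauli matrices `X^{a.val} · Z^{b.val}` span the
full `p × p` matrix algebra over `ℂ`. -/
theorem pauli_span_top (p : ℕ) [Fact p.Prime]
    (ω : ℂ) (hω : ω = Complex.exp (2 * Real.pi * Complex.I / p))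
    (X Z : Matrix (ZMod p) (ZMod p) ℂ)
    (hX : ∀ i j : ZMod p, X i j = if i = j + 1 then 1 else 0)
    (hZ : ∀ i j : ZMod p, Z i j = if i = j then ω ^ i.val else 0) :
    Submodule.span ℂ
      {M : Matrix (ZMod p) (ZMod p) ℂ | ∃ a b : ZMod p, M = X ^ a.val * Z ^ b.val}
      = ⊤ := by
  have hp : p.Prime := Fact.out
  have hp0 : (p : ℂ) ≠ 0 := by exact_mod_cast hp.ne_zero
  have hprim : IsPrimitiveRoot ω p := by
    rw [hω]; exact Complex.isPrimitiveRoot_exp p hp.ne_zero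
  have hω0 : ω ≠ 0 := hprim.ne_zero hp.ne_zero
  have hXp : ∀ (n : ℕ) (i j : ZMod p), (X ^ n) i j = if i = j + n then 1 else 0 := by
    intro n
    induction n with
    | zero => intro i j; simp [Matrix.one_apply]
    | succ n ih =>
      intro i j
      rw [pow_succ, Matrix.mul_apply]
      simp only [hX, mul_ite, mul_one, mul_zero]
      rw [Finset.sum_ite_eq' Finset.univ (j + 1)]
      simp only [Finset.mem_univ, if_true, ih]
      push_cast
      rw [add_assoc, add_comm (1 : ZMod p)]
  have hZd : Z = Matrix.diagonal (fun i : ZMod p => ω ^ i.val) := by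
    ext i j
    simp [hZ, Matrix.diagonal_apply]
  have hXZ : ∀ (a b : ℕ) (k l : ZMod p),
      (X ^ a * Z ^ b) k l = if k = l + a then (ω ^ l.val) ^ b else 0 := by
    intro a b k l
    rw [hZd, Matrix.diagonal_pow, Matrix.mul_diagonal, hXp]
    simp
  have key : ∀ (j l : ZMod p),
      ∑ b ∈ Finset.range p, ((ω ^ j.val)⁻¹) ^ b * (ω ^ l.val) ^ b
        = if l = j then (p : ℂ) else 0 := by
    intro j l
    simp only [← mul_pow]
    split_ifs with h
    · subst h
      simp [hω0]
    · have hr : (ω ^ j.val)⁻¹ * ω ^ l.val ≠ 1 := by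
        intro h1
        apply h
        apply ZMod.val_injective p
        apply hprim.pow_inj (ZMod.val_lt _) (ZMod.val_lt _)
        rw [inv_mul_eq_one₀ (pow_ne_zero _ hω0)] at h1
        exact h1.symm
      have hrp : ((ω ^ j.val)⁻¹ * ω ^ l.val) ^ p = 1 := by
        rw [mul_pow, inv_pow, ← pow_mul, ← pow_mul, mul_comm, mul_comm l.val, mul_comm j.val,
          pow_mul, pow_mul, hprim.pow_eq_one]
        simp
      rw [geom_sum_eq hr, hrp]
      simp
  rw [eq_top_iff]
  intro M _
  rw [Matrix.matrix_eq_sum_single M]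
  refine Submodule.sum_mem _ fun i _ => Submodule.sum_mem _ fun j _ => ?_
  have hs : Matrix.single i j (M i j) = ∑ b ∈ Finset.range p,
      (M i j / p * ((ω ^ j.val)⁻¹) ^ b) • (X ^ (i - j).val * Z ^ b) := by
    ext k l
    rw [Matrix.sum_apply]
    simp only [Matrix.smul_apply, hXZ, smul_eq_mul, ZMod.natCast_val, ZMod.cast_id', id_eq]
    by_cases hk : k = l + (i - j)
    · simp only [hk, if_true, mul_assoc]
      rw [← Finset.mul_sum, key, Matrix.single_apply]
      by_cases hl : l = j
      · subst hl
        simp [hp0]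
      · simp [hl, Ne.symm hl]
    · simp only [hk, if_false, mul_zero, Finset.sum_const_zero]
      rw [Matrix.single_apply, if_neg]
      rintro ⟨rfl, rfl⟩
      apply hk
      ring
  rw [hs]
  refine Submodule.sum_mem _ fun b hb => Submodule.smul_mem _ _ (Submodule.subset_span ?_)
  refine ⟨i - j, (b : ZMod p), ?_⟩
  rw [ZMod.val_cast_of_lt (Finset.mem_range.mp hb)]
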